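/- Let f be a weight 2 meromorphic modular form for SL₂(ℤ). Then the quantity Φ_Λ = (1/ω₁²) f(ω₂/ω₁) is independent of the choice of basis (ω₁,ω₂) of the lattice Λ with Im(ω₂/ω₁) > 0, and the map 𝒵(Λ, z) = (1/ω₁²) f(ω₂/ω₁)·z + ζ(Λ,z) is an elliptic zeta function of weight −1 whose associated quotient Φ_{Λ_τ}/Ψ_{Λ_τ} equals f(τ). Consequently the map 𝒵 ↦ Φ_{Λ_τ}/Ψ_{Λ_τ} from elliptic zeta functions to weight 2 meromorphic modular forms is surjective. -/

import Mathlib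

open Complex

noncomputable section

/-- The lattice `ω₁ℤ + ω₂ℤ` as a subset of `ℂ`. -/
def latticeSet (ω₁ ω₂ : ℂ) : Set ℂ := {z : ℂ | ∃ m n : ℤ, z = (m : ℂ) * ω₁ + (n : ℂ) * ω₂}

/-- A subset of `ℂ` is a lattice if it is generated by a basis `(ω₁, ω₂)` with
`Im (ω₂/ω₁) > 0`. -/
def IsLattice (Λ : Set ℂ) : Prop := ∃ ω₁ ω₂ : ℂ, 0 < (ω₂ / ω₁).im ∧ Λ = latticeSet ω₁ ω₂

/-- The Weierstrass zeta function
`ζ(Λ, z) = 1/z + Σ_{ω ∈ Λ, ω ≠ 0} (1/(z-ω) + 1/ω + z/ω²)`. -/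
def wzeta (Λ : Set ℂ) (z : ℂ) : ℂ :=
  z⁻¹ + ∑' w : {w : ℂ // w ∈ Λ ∧ w ≠ 0}, ((z - w.1)⁻¹ + (w.1)⁻¹ + z / w.1 ^ 2)

/-- `η` is a quasi-period map for the Weierstrass zeta function of `Λ`:
`ζ(Λ, z+ω) = ζ(Λ, z) + η(ω)` for all `z ∈ ℂ` and `ω ∈ Λ`. -/
def IsQuasiPeriod (Λ : Set ℂ) (η : ℂ → ℂ) : Prop :=
  ∀ ω ∈ Λ, ∀ z : ℂ, wzeta Λ (z + ω) = wzeta Λ z + η ω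

/-- An elliptic zeta function of weight `k`, together with its quasi-period maps `H`:
(1) quasi-periodicity, (2) homogeneity of weight `k`, (3) the quasi-periods
`H_{Λ_τ}(τ)` and `H_{Λ_τ}(1)` are meromorphic in `τ` on the upper half-plane. -/
structure EllipticZeta (k : ℤ) where
  Z : Set ℂ → ℂ → ℂ
  H : Set ℂ → ℂ → ℂ
  quasi : ∀ Λ : Set ℂ, IsLattice Λ → ∀ ω ∈ Λ, ∀ z : ℂ, Z Λ (z + ω) = Z Λ z + H Λ ω
  homog : ∀ Λ : Set ℂ, IsLattice Λ → ∀ α : ℂ, α ≠ 0 → ∀ z : ℂ,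
    Z ((fun w => α * w) '' Λ) (α * z) = α ^ k * Z Λ z
  merom_tau : MeromorphicOn (fun τ : ℂ => H (latticeSet 1 τ) τ) {τ : ℂ | 0 < τ.im}
  merom_one : MeromorphicOn (fun τ : ℂ => H (latticeSet 1 τ) 1) {τ : ℂ | 0 < τ.im}

lemma area_pos {a b : ℂ} (h : 0 < (b / a).im) : 0 < a.re * b.im - a.im * b.re := by
  have ha : a ≠ 0 := by rintro rfl; simp at h
  have hn : 0 < Complex.normSq a := Complex.normSq_pos.2 ha
  have : (b / a).im = (a.re * b.im - a.im * b.re) / Complex.normSq a := by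
    rw [Complex.div_im]; ring
  rw [this] at h
  exact (div_pos_iff_of_pos_right hn).1 h

lemma ne_zero_of_im_div {a b : ℂ} (h : 0 < (b / a).im) : a ≠ 0 := by
  rintro rfl; simp at h

lemma mem_left (a b : ℂ) : a ∈ latticeSet a b := ⟨1, 0, by simp⟩
lemma mem_right (a b : ℂ) : b ∈ latticeSet a b := ⟨0, 1, by simp⟩

lemma basis_indep (f : ℂ → ℂ)
    (hf_mod : ∀ a b c d : ℤ, a * d - b * c = 1 → ∀ τ : ℂ, 0 < τ.im →
      f (((a : ℂ) * τ + b) / ((c : ℂ) * τ + d)) = ((c : ℂ) * τ + d) ^ 2 * f τ)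
    (ω₁ ω₂ ω₁' ω₂' : ℂ) (h : 0 < (ω₂ / ω₁).im) (h' : 0 < (ω₂' / ω₁').im)
    (hL : latticeSet ω₁ ω₂ = latticeSet ω₁' ω₂') :
    1 / ω₁ ^ 2 * f (ω₂ / ω₁) = 1 / ω₁' ^ 2 * f (ω₂' / ω₁') := by
  have h0 := ne_zero_of_im_div h
  have h0' := ne_zero_of_im_div h'
  have hA := area_pos h
  have hA' := area_pos h'
  obtain ⟨d, c, h1⟩ : ω₁' ∈ latticeSet ω₁ ω₂ := hL ▸ mem_left _ _
  obtain ⟨b, a, h2⟩ : ω₂' ∈ latticeSet ω₁ ω₂ := hL ▸ mem_right _ _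
  obtain ⟨d', c', h3⟩ : ω₁ ∈ latticeSet ω₁' ω₂' := hL ▸ mem_left _ _
  obtain ⟨b', a', h4⟩ : ω₂ ∈ latticeSet ω₁' ω₂' := hL ▸ mem_right _ _
  have e1 : ω₁'.re * ω₂'.im - ω₁'.im * ω₂'.re
      = ((a * d - b * c : ℤ) : ℝ) * (ω₁.re * ω₂.im - ω₁.im * ω₂.re) := by
    rw [h1, h2]; simp; ring
  have e2 : ω₁.re * ω₂.im - ω₁.im * ω₂.re
      = ((a' * d' - b' * c' : ℤ) : ℝ) * (ω₁'.re * ω₂'.im - ω₁'.im * ω₂'.re) := by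
    rw [h3, h4]; simp; ring
  generalize hD : a * d - b * c = D at e1
  generalize a' * d' - b' * c' = D' at e2
  generalize ω₁'.re * ω₂'.im - ω₁'.im * ω₂'.re = A' at *
  generalize ω₁.re * ω₂.im - ω₁.im * ω₂.re = A at *
  have hDpos : (0 : ℝ) < D := by
    rw [e1] at hA'; exact (pos_iff_pos_of_mul_pos hA').2 hA
  have hprod : ((D' * D : ℤ) : ℝ) = 1 := by
    have : ((D' * D : ℤ) : ℝ) * A = 1 * A := by
      push_cast; rw [mul_assoc, ← e1, one_mul]; exact e2.symm
    exact mul_right_cancel₀ hA.ne' this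
  have hD1 : D = 1 := by
    have hp : D' * D = 1 := by exact_mod_cast hprod
    have hd : 0 < D := by exact_mod_cast hDpos
    rcases Int.eq_one_or_neg_one_of_mul_eq_one' hp with h | h <;> omega
  have key := hf_mod a b c d (hD.trans hD1) (ω₂ / ω₁) h
  have e3 : (c : ℂ) * (ω₂ / ω₁) + d = ω₁' / ω₁ := by rw [h1]; field_simp; ring
  have e4 : (a : ℂ) * (ω₂ / ω₁) + b = ω₂' / ω₁ := by rw [h2]; field_simp; ring
  rw [e3, e4, div_div_div_cancel_right₀ h0] at key
  rw [key]; field_simp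

lemma wzeta_homog (Λ : Set ℂ) (α : ℂ) (hα : α ≠ 0) (z : ℂ) :
    wzeta ((fun w => α * w) '' Λ) (α * z) = α⁻¹ * wzeta Λ z := by
  unfold wzeta
  let e : {w : ℂ // w ∈ Λ ∧ w ≠ 0} ≃ {w : ℂ // w ∈ (fun w => α * w) '' Λ ∧ w ≠ 0} :=
    { toFun := fun w => ⟨α * w.1, ⟨w.1, w.2.1, rfl⟩, mul_ne_zero hα w.2.2⟩
      invFun := fun w => ⟨α⁻¹ * w.1, by
        obtain ⟨w, ⟨v, hv, rfl⟩, hw⟩ := w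
        simpa [hα] using ⟨hv, fun h => hw (by simp [h])⟩⟩
      left_inv := fun w => by ext; simp [hα]
      right_inv := fun w => by ext; simp [hα] }
  rw [← e.tsum_eq, mul_add, ← tsum_mul_left, mul_inv]
  congr 1
  refine tsum_congr fun w => ?_
  have hw := w.2.2
  simp only [e, Equiv.coe_fn_mk, ← mul_sub, mul_inv]
  field_simp

lemma wzeta_zero (Λ : Set ℂ) : wzeta Λ 0 = 0 := by
  simp [wzeta]

lemma image_latticeSet (α a b : ℂ) :
    (fun w => α * w) '' latticeSet a b = latticeSet (α * a) (α * b) := by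
  ext z
  constructor
  · rintro ⟨w, ⟨m, n, rfl⟩, rfl⟩
    exact ⟨m, n, by ring⟩
  · rintro ⟨m, n, rfl⟩
    exact ⟨_, ⟨m, n, rfl⟩, by ring⟩

lemma wzeta_add (η : ℂ → ℂ → ℂ)
    (hη : ∀ τ : ℂ, 0 < τ.im → IsQuasiPeriod (latticeSet 1 τ) (η τ))
    (Λ : Set ℂ) (hΛ : IsLattice Λ) (ω : ℂ) (hω : ω ∈ Λ) (z : ℂ) :
    wzeta Λ (z + ω) = wzeta Λ z + wzeta Λ ω := by
  obtain ⟨a, b, h, rfl⟩ := hΛ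
  have ha := ne_zero_of_im_div h
  have e : latticeSet a b = (fun w => a * w) '' latticeSet 1 (b / a) := by
    rw [image_latticeSet, mul_one, mul_div_cancel₀ _ ha]
  rw [e] at hω ⊢
  obtain ⟨v, hv, rfl⟩ := hω
  obtain ⟨y, rfl⟩ : ∃ y, z = a * y := ⟨z / a, by field_simp⟩
  simp only
  have h1 := hη _ h v hv y
  have h2 := hη _ h v hv 0
  rw [wzeta_zero, zero_add, zero_add] at h2
  rw [← mul_add, wzeta_homog _ _ ha, wzeta_homog _ _ ha, wzeta_homog _ _ ha, h1, h2]
  ring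

section copied

open UpperHalfPlane hiding I
open EisensteinSeries ModularForm ModularGroup Filter Complex MatrixGroups Set SummationFilter
open scoped Real Topology

/-- This is an auxiliary correction term for proving how E2 transforms. It allows us to work with
nicer indexing sets for our infinite sums. The key is the `gaux_identity` below. -/
def gdelta (x : Fin 2 → ℤ) : ℂ := if x = ![0, 0] then 1 else if x = ![0, -1] then 2 else 0

@[simp]
lemma gdelta_eq : gdelta ![0, 0] = 1 := by simp [gdelta]

@[simp]
lemma gdelta_eq_two : gdelta ![0, -1] = 2 := by simp [gdelta]

lemma gdelta_eventually_cofinite : gdelta =ᶠ[cofinite] 0 := by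
  filter_upwards [eventually_cofinite_ne ![0, 0], eventually_cofinite_ne ![0, -1]] with x hx hx'
  simp_all [gdelta]

/-- This term gives an alternative infinite sum for G2 which is absolutely convergent. -/
abbrev gTerm (z : ℍ) (m : Fin 2 → ℤ) : ℂ :=
    (((m 0 : ℂ) * z + m 1) ^ 2 * (m 0 * z + m 1 + 1))⁻¹ + gdelta m

lemma gTerm_summable (z : ℍ) : Summable (gTerm z) := by
  have H : Summable fun m ↦ gTerm z m - gdelta m := by
    simp_rw [gTerm, add_sub_cancel_right]
    apply summable_of_isBigO_rpow_norm (a := 3) (by linarith)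
    simpa [pow_three, pow_two, ← mul_assoc] using ((isBigO_linear_add_const_vec z 0 1).mul
      (isBigO_linear_add_const_vec z 0 0)).mul (isBigO_linear_add_const_vec z 0 0)
  exact H.congr_cofinite <| gdelta_eventually_cofinite.mp <| .of_forall <| by simp +contextual

lemma gTerm_prod_summable (z : ℍ) : Summable (fun p : ℤ × ℤ ↦ gTerm z ![p.1, p.2]) := by
  apply (finTwoArrowEquiv _).symm.summable_iff.mpr (gTerm_summable z)

lemma gaux_identity (z : ℍ) (b n : ℤ) : ((b : ℂ) * z + n + 1)⁻¹ * (((b : ℂ) * z + n) ^ 2)⁻¹ +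
    (gdelta ![b, n]) + (((b : ℂ) * z + n)⁻¹ - ((b : ℂ) * z + n + 1)⁻¹) = (((b : ℂ) * z + n) ^ 2)⁻¹ := by
  by_cases h : b = 0 ∧ n = 0
  · simp [h.1, h.2]
  · simp only [not_and] at h
    by_cases hb : b = 0
    · by_cases hn : n = -1
      · simp [hb, hn, gdelta_eq_two]
        ring
      · have hn0 : (n : ℂ) ≠ 0 := by aesop
        have hn1 : (n : ℂ) + 1 ≠ 0 := by norm_cast; grind
        simp [gdelta, h, hb, hn]
        grind
    · have h0 : (b : ℂ) * z + n + 1 ≠ 0 := by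
        simpa [add_assoc] using linear_ne_zero (cd := ![b, n + 1]) z (by aesop)
      have h1 : (b : ℂ) * z + n ≠ 0 := linear_ne_zero (cd := ![b, n]) z (by aesop)
      simp [gdelta]
      grind

/-- This shows `G2` can be defined as a certain absolutely convergent double sum. -/
lemma G2_eq_tsum_gTerm (z : ℍ) : G2 z = ∑' m, ∑' n, gTerm z ![m, n] := by
  set t := ∑' m, ∑' n, (gTerm z ![m, n])
  rw [G2, show t = t + 0 by ring, ← tsum_tsum_symmetricIco_sub_eq z, ← Summable.tsum_add]
  · rw [← tsum_eq_of_summable_unconditional (L := symmetricIcc ℤ)]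
    · congr with a
      rw [e2Summand, tsum_eq_of_summable_unconditional
        (summable_right_one_div_linear_sub_one_div_linear_succ z a), ← Summable.tsum_add
        ((gTerm_prod_summable z).prod_factor _)
        (summable_right_one_div_linear_sub_one_div_linear_succ z a)]
      exact tsum_congr (fun b ↦ by simp [eisSummand, gTerm, gaux_identity z a b, zpow_ofNat])
    · simpa only [tsum_symmetricIco_linear_sub_linear_add_one_eq_zero z, add_zero]
        using (gTerm_prod_summable z).prod
  · exact (gTerm_prod_summable z).prod
  · exact summable_zero.congr
      fun b ↦ by simp [← tsum_symmetricIco_linear_sub_linear_add_one_eq_zero z b]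

lemma tsum_gTerm_eq_tsum (z : ℍ) : ∑' (m : Fin 2 → ℤ), gTerm z m =
    ∑' m : ℤ, ∑' n : ℤ, gTerm z ![m, n] := by
  rw [← (finTwoArrowEquiv _).symm.tsum_eq]
  exact Summable.tsum_prod' (gTerm_prod_summable z) ((gTerm_prod_summable z).prod_factor)


end copied

open EisensteinSeries UpperHalfPlane in
lemma wzeta_one (τ : ℍ) : wzeta (latticeSet 1 τ) 1 = G2 τ := by
  rw [G2_eq_tsum_gTerm, ← tsum_gTerm_eq_tsum, (gTerm_summable τ).tsum_eq_add_tsum_ite 0]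
  have lin : ∀ m : Fin 2 → ℤ, (m 0 : ℂ) * τ + m 1 = 0 → m = 0 := by
    intro m hm
    by_contra hne
    have := linear_ne_zero τ (cd := fun i => (m i : ℝ)) (by
      intro h; apply hne; ext i; have := congrFun h i; simpa using this)
    exact this (by simpa using hm)
  have inj : ∀ m n : Fin 2 → ℤ, (m 0 : ℂ) * τ + m 1 = (n 0 : ℂ) * τ + n 1 → m = n := by
    intro m n h
    rw [← sub_eq_zero]
    apply lin
    simp only [Pi.sub_apply]; push_cast; linear_combination h
  let e : {m : Fin 2 → ℤ // m ∈ ({0}ᶜ : Set (Fin 2 → ℤ))} ≃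
      {w : ℂ // w ∈ latticeSet 1 τ ∧ w ≠ 0} :=
    Equiv.ofBijective (fun m => ⟨-((m.1 0 : ℂ) * τ + m.1 1),
      ⟨-m.1 1, -m.1 0, by push_cast; ring⟩, fun h => m.2 (lin _ (neg_eq_zero.1 h))⟩) (by
      constructor
      · intro m n h
        ext1
        exact inj _ _ (neg_injective (congrArg Subtype.val h))
      · rintro ⟨w, ⟨m, n, rfl⟩, hw⟩
        refine ⟨⟨![-n, -m], fun h => hw ?_⟩, ?_⟩
        · have h0 := congrFun h 0
          have h1 := congrFun h 1
          simp at h0 h1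
          simp [h0, h1]
        · ext1; simp)
  unfold wzeta
  rw [← e.tsum_eq]
  have : ∀ m : Fin 2 → ℤ, (if m = 0 then 0 else gTerm τ m)
      = ({0}ᶜ : Set (Fin 2 → ℤ)).indicator (gTerm τ) m := by
    intro m; by_cases h : m = 0 <;> simp [h]
  simp_rw [this]
  rw [← tsum_subtype]
  have h00 : (![0, 0] : Fin 2 → ℤ) = 0 := by ext i; fin_cases i <;> rfl
  congr 1
  · simp [gTerm, gdelta, h00]
  refine tsum_congr fun m => ?_
  obtain ⟨m, hm⟩ := m
  have hm0 : m ≠ 0 := hm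
  have he : ((e ⟨m, hm⟩ : {w : ℂ // w ∈ latticeSet 1 τ ∧ w ≠ 0}) : ℂ)
      = -((m 0 : ℂ) * τ + m 1) := rfl
  rw [he]
  simp only [gTerm, gdelta, h00, hm0, if_false]
  by_cases h1 : m = ![0, -1]
  · subst h1; norm_num
  have hv : (m 0 : ℂ) * τ + m 1 ≠ 0 := fun h => hm0 (lin _ h)
  have hv1 : (m 0 : ℂ) * τ + m 1 + 1 ≠ 0 := fun h => h1 (inj _ _ (by
    simp; linear_combination h))
  simp only [h1, if_false]
  generalize (m 0 : ℂ) * τ + m 1 = v at *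
  have : (1 - -v) ≠ 0 := by rwa [sub_neg_eq_add, add_comm]
  field_simp
  ring

open EisensteinSeries UpperHalfPlane ModularGroup in
lemma wzeta_tau (τ : ℍ) :
    wzeta (latticeSet 1 τ) τ = τ * G2 τ - 2 * Real.pi * Complex.I := by
  have ht : (τ : ℂ) ≠ 0 := ne_zero τ
  have h1 := wzeta_homog (latticeSet 1 ((S • τ : ℍ) : ℂ)) τ ht 1
  have hS : ((S • τ : ℍ) : ℂ) = -(τ : ℂ)⁻¹ := by
    rw [modular_S_smul]; simp [inv_neg]
  have hL : (fun w => (τ : ℂ) * w) '' latticeSet 1 ((S • τ : ℍ) : ℂ) = latticeSet 1 τ := by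
    rw [image_latticeSet, hS]
    ext z
    constructor
    · rintro ⟨m, n, rfl⟩
      exact ⟨-n, m, by push_cast; field_simp; ring⟩
    · rintro ⟨m, n, rfl⟩
      exact ⟨n, -m, by push_cast; field_simp; ring⟩
  rw [hL, mul_one, wzeta_one] at h1
  rw [h1, G2_S_transform τ]
  field_simp
  ring

open EisensteinSeries UpperHalfPlane in
lemma wzeta_one_mero :
    MeromorphicOn (fun τ : ℂ => wzeta (latticeSet 1 τ) 1) {τ : ℂ | 0 < τ.im} := by
  have hd : DifferentiableOn ℂ (E2 ∘ ofComplex) {τ : ℂ | 0 < τ.im} :=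
    UpperHalfPlane.mdifferentiable_iff.1 E2_mdifferentiable
  have ho : IsOpen {τ : ℂ | 0 < τ.im} := isOpen_upperHalfPlaneSet
  intro τ hτ
  have hm : MeromorphicAt (fun z => (2 * riemannZeta 2) * (E2 ∘ ofComplex) z) τ :=
    (MeromorphicAt.const _ _).mul (hd.analyticAt (ho.mem_nhds hτ)).meromorphicAt
  refine hm.congr (Filter.EventuallyEq.filter_mono ?_ nhdsWithin_le_nhds)
  filter_upwards [ho.mem_nhds hτ] with z hz
  have hz' : ((⟨z, hz⟩ : ℍ) : ℂ) = z := rfl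
  have := wzeta_one ⟨z, hz⟩
  rw [hz'] at this
  rw [this, Function.comp_apply, ofComplex_apply_of_im_pos hz]
  simp only [E2, Pi.smul_apply, smul_eq_mul]
  have : riemannZeta 2 ≠ 0 := riemannZeta_ne_zero_of_one_le_re (by norm_num)
  field_simp

lemma wzeta_tau_mero :
    MeromorphicOn (fun τ : ℂ => wzeta (latticeSet 1 τ) τ) {τ : ℂ | 0 < τ.im} := by
  intro τ hτ
  have ho : IsOpen {τ : ℂ | 0 < τ.im} := UpperHalfPlane.isOpen_upperHalfPlaneSet
  have hm : MeromorphicAt (fun z : ℂ => z * wzeta (latticeSet 1 z) 1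
      - 2 * Real.pi * Complex.I) τ :=
    ((MeromorphicAt.id τ).mul (wzeta_one_mero τ hτ)).sub (MeromorphicAt.const _ _)
  refine hm.congr (Filter.EventuallyEq.filter_mono ?_ nhdsWithin_le_nhds)
  filter_upwards [ho.mem_nhds hτ] with z hz
  have h1 := wzeta_one ⟨z, hz⟩
  have h2 := wzeta_tau ⟨z, hz⟩
  rw [← h1] at h2
  exact h2.symm

open Classical in
/-- The coefficient of `z` attached to a lattice. -/
def zcoef (f : ℂ → ℂ) (Λ : Set ℂ) : ℂ :=
  if h : IsLattice Λ then
    1 / h.choose ^ 2 * f (h.choose_spec.choose / h.choose) else 0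

/-- for a weight 2 meromorphic modular form `f` for `SL₂(ℤ)`, the quantity
`(1/ω₁²) f(ω₂/ω₁)` is independent of the choice of oriented basis of the lattice, and
`𝒵(Λ, z) = (1/ω₁²) f(ω₂/ω₁) z + ζ(Λ, z)` is an elliptic zeta function of weight `-1`
whose associated quotient `Φ_{Λ_τ}/Ψ_{Λ_τ}` equals `f(τ)`; hence `𝒵 ↦ Φ/Ψ` is
surjective onto weight 2 meromorphic modular forms. -/
theorem modularForm_to_ellipticZeta (f : ℂ → ℂ)
    (hf_mer : MeromorphicOn f {τ : ℂ | 0 < τ.im})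
    (hf_mod : ∀ a b c d : ℤ, a * d - b * c = 1 → ∀ τ : ℂ, 0 < τ.im →
      f (((a : ℂ) * τ + b) / ((c : ℂ) * τ + d)) = ((c : ℂ) * τ + d) ^ 2 * f τ)
    (η : ℂ → ℂ → ℂ) (hη : ∀ τ : ℂ, 0 < τ.im → IsQuasiPeriod (latticeSet 1 τ) (η τ)) :
    (∀ ω₁ ω₂ ω₁' ω₂' : ℂ, 0 < (ω₂ / ω₁).im → 0 < (ω₂' / ω₁').im →
       latticeSet ω₁ ω₂ = latticeSet ω₁' ω₂' →
       1 / ω₁ ^ 2 * f (ω₂ / ω₁) = 1 / ω₁' ^ 2 * f (ω₂' / ω₁')) ∧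
    ∃ Z : EllipticZeta (-1),
      (∀ ω₁ ω₂ : ℂ, 0 < (ω₂ / ω₁).im → ∀ z : ℂ,
        Z.Z (latticeSet ω₁ ω₂) z = 1 / ω₁ ^ 2 * f (ω₂ / ω₁) * z + wzeta (latticeSet ω₁ ω₂) z) ∧
      ∀ τ : ℂ, 0 < τ.im → ∀ Φ Ψ : ℂ,
        2 * (Real.pi : ℂ) * Complex.I * Φ
          = η τ τ * Z.H (latticeSet 1 τ) 1 - η τ 1 * Z.H (latticeSet 1 τ) τ →
        2 * (Real.pi : ℂ) * Complex.I * Ψ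
          = Z.H (latticeSet 1 τ) τ - τ * Z.H (latticeSet 1 τ) 1 →
        Φ / Ψ = f τ := by
  have hb := basis_indep f hf_mod
  have hc : ∀ ω₁ ω₂ : ℂ, 0 < (ω₂ / ω₁).im →
      zcoef f (latticeSet ω₁ ω₂) = 1 / ω₁ ^ 2 * f (ω₂ / ω₁) := by
    intro a b h
    have hL : IsLattice (latticeSet a b) := ⟨a, b, h, rfl⟩
    rw [zcoef, dif_pos hL]
    exact (hb _ _ _ _ h hL.choose_spec.choose_spec.1 hL.choose_spec.choose_spec.2).symm
  have hc1 : ∀ τ : ℂ, 0 < τ.im → zcoef f (latticeSet 1 τ) = f τ := by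
    intro τ hτ
    rw [hc 1 τ (by simpa using hτ)]; simp
  have hcm : MeromorphicOn (fun τ : ℂ => zcoef f (latticeSet 1 τ)) {τ : ℂ | 0 < τ.im} := by
    intro τ hτ
    have ho : IsOpen {τ : ℂ | 0 < τ.im} := UpperHalfPlane.isOpen_upperHalfPlaneSet
    refine (hf_mer τ hτ).congr (Filter.EventuallyEq.filter_mono ?_ nhdsWithin_le_nhds)
    filter_upwards [ho.mem_nhds hτ] with z hz
    exact (hc1 z hz).symm
  refine ⟨hb, ⟨fun Λ z => zcoef f Λ * z + wzeta Λ z, fun Λ z => zcoef f Λ * z + wzeta Λ z,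
    ?_, ?_, ?_, ?_⟩, ?_, ?_⟩
  · intro Λ hΛ ω hω z
    rw [wzeta_add η hη Λ hΛ ω hω z]; ring
  · rintro Λ ⟨a, b, h, rfl⟩ α hα z
    have ha := ne_zero_of_im_div h
    rw [wzeta_homog _ _ hα, image_latticeSet, hc a b h,
      hc _ _ (by rwa [mul_div_mul_left _ _ hα]), mul_div_mul_left _ _ hα, zpow_neg_one]
    field_simp
  · intro τ hτ
    exact ((hcm τ hτ).mul (MeromorphicAt.id τ)).add (wzeta_tau_mero τ hτ)
  · intro τ hτ
    exact ((hcm τ hτ).mul (MeromorphicAt.const 1 τ)).add (wzeta_one_mero τ hτ)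
  · intro a b h z
    change zcoef f (latticeSet a b) * z + wzeta (latticeSet a b) z = _
    rw [hc a b h]
  · intro τ hτ Φ Ψ hΦ hΨ
    have e1 : η τ 1 = wzeta (latticeSet 1 τ) 1 := by
      have := hη τ hτ 1 (mem_left _ _) 0
      rw [wzeta_zero, zero_add, zero_add] at this
      exact this.symm
    have e2 : η τ τ = wzeta (latticeSet 1 τ) τ := by
      have := hη τ hτ τ (mem_right _ _) 0
      rw [wzeta_zero, zero_add, zero_add] at this
      exact this.symm
    have e3 : wzeta (latticeSet 1 τ) τ
        = τ * wzeta (latticeSet 1 τ) 1 - 2 * Real.pi * Complex.I := by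
      have h1 := wzeta_one ⟨τ, hτ⟩
      have h2 := wzeta_tau ⟨τ, hτ⟩
      rw [← h1] at h2
      exact h2
    change 2 * (Real.pi : ℂ) * Complex.I * Φ
      = η τ τ * (zcoef f (latticeSet 1 τ) * 1 + wzeta (latticeSet 1 τ) 1)
        - η τ 1 * (zcoef f (latticeSet 1 τ) * τ + wzeta (latticeSet 1 τ) τ) at hΦ
    change 2 * (Real.pi : ℂ) * Complex.I * Ψ
      = (zcoef f (latticeSet 1 τ) * τ + wzeta (latticeSet 1 τ) τ)
        - τ * (zcoef f (latticeSet 1 τ) * 1 + wzeta (latticeSet 1 τ) 1) at hΨ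
    rw [e1, e2, hc1 τ hτ, e3] at hΦ
    rw [hc1 τ hτ, e3] at hΨ
    have hpi : 2 * (Real.pi : ℂ) * Complex.I ≠ 0 := Complex.two_pi_I_ne_zero
    have hΨ1 : Ψ = -1 := by
      apply mul_left_cancel₀ hpi
      rw [hΨ]; ring
    have hΦ1 : Φ = -f τ := by
      apply mul_left_cancel₀ hpi
      rw [hΦ]; ring
    rw [hΨ1, hΦ1]; simp
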